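/- The Alpert refinement coefficients satisfy the second partial difference equation: for all natural numbers i, j with 1 ≤ j ≤ i (using the convention c_{a,b} = 0 whenever b > a), sqrt((2i+1)/(2i−1))·c_{i−1,j} + sqrt((2i+1)/(2i+3))·c_{i+1,j} = (1/2)·sqrt((2j−1)/(2j+1))·c_{i,j−1} + (1/2)·sqrt((2j+3)/(2j+1))·c_{i,j+1} + c_{i,j}. -/

import Mathlib

/-!
Write `P_n` for the Legendre polynomials, `W_n = (X² - 1)ⁿ / (2ⁿ n!)` (so `P_n = Dⁿ W_n`), and
`I_{i,j} = ∫_0^1 P_i(t) P_j(2t-1) dt`. After the square roots coming from the normalisation are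
cancelled, the claim reads
`I_{i-1,j} + I_{i+1,j} = ((2j-1) I_{i,j-1} + (2j+3) I_{i,j+1}) / (2 (2j+1)) + I_{i,j}`.

It is a linear combination of two relations:

* `legendreInt_mul`, from the three-term recurrence (`three_term`) for `P_i` at `t` and for `P_j`
  at `2t - 1`, together with `t = (1 + (2t - 1)) / 2`;
* `legendreInt_parts`, from `P_{n+1}' - P_{n-1}' = (2n+1) P_n` and an integration by parts whose
  boundary terms vanish, because `(P_{j+1} - P_{j-1}) / (2j+1) = D^{j-1} W_j` is zero at `±1`.

Both facts about `P_n` follow from `W_{n+1}' = X W_n` and `W_{n+1}'' = (2n+1) W_n + W_{n-1}`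
(`legendrePoly_succ_succ`, `legendrePoly_sub`). Indices are shifted, `i = m + 1` and `j = n + 1`,
to avoid truncated subtraction.
-/

open MeasureTheory

/-- The orthonormal Legendre polynomial of degree `n` on `[-1,1]`,
`p̂_n(t) = sqrt((2n+1)/2) · (1/(2^n n!)) dⁿ/dtⁿ (t²-1)ⁿ`. -/
noncomputable def legendreHat (n : ℕ) : ℝ → ℝ := fun t =>
  Real.sqrt ((2 * n + 1) / 2) * ((1 : ℝ) / (2 ^ n * n.factorial)) *
    iteratedDeriv n (fun s => (s ^ 2 - 1) ^ n) t

/-- The Alpert refinement coefficients `c_{i,j} = 2∫_0^1 p̂_i(t) p̂_j(2t-1) dt`. -/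
noncomputable def alpertC (i j : ℕ) : ℝ :=
  2 * ∫ t in (0:ℝ)..1, legendreHat i t * legendreHat j (2 * t - 1)

open Polynomial

/-- The normalised Rodrigues power `(X² - 1)ⁿ / (2ⁿ n!)`. -/
noncomputable def rodriguesPow (n : ℕ) : ℝ[X] :=
  C ((1 : ℝ) / (2 ^ n * n.factorial)) * (X ^ 2 - 1) ^ n

/-- The Legendre polynomial `P_n`, normalised by `P_n(1) = 1`, via the Rodrigues formula. -/
noncomputable def legendrePoly (n : ℕ) : ℝ[X] := derivative^[n] (rodriguesPow n)

/-- The antiderivative of `P_{m+1}` that vanishes at `±1`. -/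
noncomputable def legendrePrimitive (m : ℕ) : ℝ[X] := derivative^[m] (rodriguesPow (m + 1))

lemma iteratedDeriv_polynomial_eval (p : ℝ[X]) (n : ℕ) :
    iteratedDeriv n (fun t => p.eval t) = fun t => (derivative^[n] p).eval t := by
  induction n with
  | zero => simp
  | succ n ih =>
    rw [iteratedDeriv_succ, ih, Function.iterate_succ_apply']
    funext t
    exact Polynomial.deriv _

lemma legendreHat_eq (n : ℕ) (t : ℝ) :
    legendreHat n t = Real.sqrt ((2 * n + 1) / 2) * (legendrePoly n).eval t := by
  have h := congrFun (iteratedDeriv_polynomial_eval ((X ^ 2 - 1) ^ n) n) t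
  simp only [eval_pow, eval_sub, eval_X, eval_one] at h
  rw [legendreHat, h, legendrePoly, rodriguesPow, iterate_derivative_C_mul, eval_mul, eval_C,
    mul_assoc]

lemma derivative_rodriguesPow_succ (n : ℕ) :
    derivative (rodriguesPow (n + 1)) = X * rodriguesPow n := by
  have hn : (n.factorial : ℝ) ≠ 0 := by positivity
  have hc : (1 : ℝ) / (2 ^ (n + 1) * (n + 1).factorial) * ((n + 1) * 2)
      = 1 / (2 ^ n * n.factorial) := by
    rw [Nat.factorial_succ]
    push_cast
    field_simp
    ring
  rw [rodriguesPow, rodriguesPow, ← hc]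
  simp only [derivative_mul, derivative_C, derivative_pow, derivative_sub, derivative_X,
    derivative_one, map_mul, map_add, map_natCast, map_one, add_tsub_cancel_right]
  push_cast
  have h2 : (C 2 : ℝ[X]) = 2 := rfl
  rw [h2]
  ring

lemma sq_sub_one_mul_rodriguesPow (n : ℕ) :
    (X ^ 2 - 1) * rodriguesPow n = C (2 * ((n : ℝ) + 1)) * rodriguesPow (n + 1) := by
  have hn : (n.factorial : ℝ) ≠ 0 := by positivity
  have hc : (1 : ℝ) / (2 ^ n * n.factorial)
      = 2 * ((n : ℝ) + 1) * (1 / (2 ^ (n + 1) * (n + 1).factorial)) := by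
    rw [Nat.factorial_succ]
    push_cast
    field_simp
    ring
  rw [rodriguesPow, rodriguesPow, hc, C_mul, pow_succ]
  ring

lemma derivative_derivative_rodriguesPow (m : ℕ) :
    derivative (derivative (rodriguesPow (m + 2))) =
      C (2 * (m : ℝ) + 3) * rodriguesPow (m + 1) + rodriguesPow m := by
  have h := sq_sub_one_mul_rodriguesPow m
  rw [derivative_rodriguesPow_succ, derivative_mul, derivative_X, derivative_rodriguesPow_succ]
  have hc : C (2 * (m : ℝ) + 3) = C (2 * ((m : ℝ) + 1)) + 1 := by
    rw [← C_1, ← C_add]; ring_nf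
  rw [hc, add_mul, ← h]
  ring

/-- Applying `D^m` to the expansion of `D² W_{m+2}`, where `W_n` is the Rodrigues power. -/
lemma legendrePoly_sub (m : ℕ) :
    legendrePoly (m + 2) - legendrePoly m = C (2 * (m : ℝ) + 3) * legendrePrimitive m := by
  rw [legendrePoly, Function.iterate_succ_apply, Function.iterate_succ_apply,
    derivative_derivative_rodriguesPow, iterate_map_add, iterate_derivative_C_mul,
    legendrePoly, legendrePrimitive]
  ring

/-- Applying `D^{m+1}` to `W_{m+2}' = X W_{m+1}`, where `W_n` is the Rodrigues power. -/
lemma legendrePoly_succ_succ (m : ℕ) :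
    legendrePoly (m + 2) = X * legendrePoly (m + 1) + C ((m : ℝ) + 1) * legendrePrimitive m := by
  rw [legendrePoly, Function.iterate_succ_apply, derivative_rodriguesPow_succ,
    mul_comm X, iterate_derivative_mul_X, legendrePoly, legendrePrimitive]
  simp [mul_comm]

lemma derivative_legendrePrimitive (m : ℕ) :
    derivative (legendrePrimitive m) = legendrePoly (m + 1) := by
  rw [legendrePrimitive, legendrePoly, Function.iterate_succ_apply']

lemma legendrePrimitive_eval (m : ℕ) {x : ℝ} (hx : x ^ 2 = 1) :
    (legendrePrimitive m).eval x = 0 := by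
  have h : (X ^ 2 - 1 : ℝ[X]) ∣ derivative^[m] ((X ^ 2 - 1) ^ (m + 1)) := by
    simpa using pow_sub_dvd_iterate_derivative_pow (X ^ 2 - 1 : ℝ[X]) (m + 1) m
  obtain ⟨q, hq⟩ := h
  rw [legendrePrimitive, rodriguesPow, iterate_derivative_C_mul, hq]
  simp [hx]

/-- The unnormalised refinement integral `∫_0^1 P_i(t) P_j(2t-1) dt`. -/
noncomputable def legendreInt (i j : ℕ) : ℝ :=
  ∫ t in (0:ℝ)..1, (legendrePoly i).eval t * (legendrePoly j).eval (2 * t - 1)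

lemma alpertC_eq (i j : ℕ) :
    alpertC i j = 2 * (Real.sqrt ((2 * i + 1) / 2) * Real.sqrt ((2 * j + 1) / 2))
      * legendreInt i j := by
  simp only [alpertC, legendreInt, ← intervalIntegral.integral_const_mul]
  congr 1
  funext t
  rw [legendreHat_eq, legendreHat_eq]
  ring

lemma intervalIntegrable_eval_mul (p q : ℝ[X]) :
    IntervalIntegrable (fun t : ℝ => p.eval t * q.eval (2 * t - 1)) volume 0 1 :=
  Continuous.intervalIntegrable (by fun_prop) _ _

lemma three_term (m : ℕ) (x : ℝ) :
    ((m : ℝ) + 2) * (legendrePoly (m + 2)).eval x + (m + 1) * (legendrePoly m).eval x =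
      (2 * m + 3) * (x * (legendrePoly (m + 1)).eval x) := by
  have h1 := congrArg (eval x) (legendrePoly_sub m)
  have h2 := congrArg (eval x) (legendrePoly_succ_succ m)
  simp only [eval_sub, eval_add, eval_mul, eval_C, eval_X] at h1 h2
  linear_combination (2 * (m : ℝ) + 3) * h2 - ((m : ℝ) + 1) * h1

/-- The two three-term recurrences are compared through `t = (1 + (2t - 1)) / 2`. -/
lemma legendreInt_mul (m n : ℕ) :
    2 * (2 * (n : ℝ) + 3) * (((m : ℝ) + 2) * legendreInt (m + 2) (n + 1)
        + (m + 1) * legendreInt m (n + 1)) =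
      (2 * m + 3) * ((2 * n + 3) * legendreInt (m + 1) (n + 1)
        + (n + 2) * legendreInt (m + 1) (n + 2) + (n + 1) * legendreInt (m + 1) n) := by
  simp only [legendreInt, ← intervalIntegral.integral_const_mul]
  have hI := fun (c : ℝ) (a b : ℕ) =>
    (intervalIntegrable_eval_mul (legendrePoly a) (legendrePoly b)).const_mul c
  rw [← intervalIntegral.integral_add (hI _ _ _) (hI _ _ _),
    ← intervalIntegral.integral_add (hI _ _ _) (hI _ _ _),
    ← intervalIntegral.integral_add ((hI _ _ _).add (hI _ _ _)) (hI _ _ _),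
    ← intervalIntegral.integral_const_mul, ← intervalIntegral.integral_const_mul]
  congr 1
  funext t
  have h1 := three_term m t
  have h2 := three_term n (2 * t - 1)
  linear_combination (2 * (2 * (n : ℝ) + 3) * (legendrePoly (n + 1)).eval (2 * t - 1)) * h1
    - ((2 * (m : ℝ) + 3) * (legendrePoly (m + 1)).eval t) * h2

/-- Integration by parts; the boundary terms vanish since `2t - 1 = ±1` at the endpoints. -/
lemma integral_by_parts (p : ℝ[X]) (n : ℕ) :
    ∫ t in (0:ℝ)..1, (derivative p).eval t * (legendrePrimitive n).eval (2 * t - 1) =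
      -(2 * ∫ t in (0:ℝ)..1, p.eval t * (legendrePoly (n + 1)).eval (2 * t - 1)) := by
  have hv : ∀ t : ℝ, HasDerivAt (fun t : ℝ => (legendrePrimitive n).eval (2 * t - 1))
      ((legendrePoly (n + 1)).eval (2 * t - 1) * 2) t := by
    intro t
    have h1 : HasDerivAt (fun t : ℝ => 2 * t - 1) 2 t := by
      simpa using ((hasDerivAt_id t).const_mul 2).sub_const 1
    have h2 := (legendrePrimitive n).hasDerivAt (2 * t - 1)
    rw [derivative_legendrePrimitive] at h2
    exact h2.comp t h1
  have h := intervalIntegral.integral_mul_deriv_eq_deriv_mul (a := (0:ℝ)) (b := 1)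
    (fun t _ => p.hasDerivAt t) (fun t _ => hv t)
    (Continuous.intervalIntegrable (by fun_prop) _ _)
    (Continuous.intervalIntegrable (by fun_prop) _ _)
  rw [legendrePrimitive_eval n (x := 2 * 1 - 1) (by norm_num),
    legendrePrimitive_eval n (x := 2 * 0 - 1) (by norm_num)] at h
  rw [← intervalIntegral.integral_const_mul]
  have e : (fun t : ℝ => p.eval t * ((legendrePoly (n + 1)).eval (2 * t - 1) * 2)) =
      fun t => 2 * (p.eval t * (legendrePoly (n + 1)).eval (2 * t - 1)) := by
    funext t; ring
  rw [e] at h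
  linarith

lemma legendreInt_parts (m n : ℕ) :
    2 * (2 * (n : ℝ) + 3) * (legendreInt (m + 2) (n + 1) - legendreInt m (n + 1)) =
      -((2 * m + 3) * (legendreInt (m + 1) (n + 2) - legendreInt (m + 1) n)) := by
  have h := integral_by_parts (legendrePoly (m + 2) - legendrePoly m) n
  have hI := fun (a b : ℕ) => intervalIntegrable_eval_mul (legendrePoly a) (legendrePoly b)
  have hR : ∫ t in (0:ℝ)..1, (legendrePoly (m + 2) - legendrePoly m).eval t
      * (legendrePoly (n + 1)).eval (2 * t - 1)
      = legendreInt (m + 2) (n + 1) - legendreInt m (n + 1) := by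
    rw [legendreInt, legendreInt, ← intervalIntegral.integral_sub (hI _ _) (hI _ _)]
    congr 1
    funext t
    rw [eval_sub]; ring
  have hL : (2 * (n : ℝ) + 3) * ∫ t in (0:ℝ)..1, (derivative (legendrePoly (m + 2)
      - legendrePoly m)).eval t * (legendrePrimitive n).eval (2 * t - 1)
      = (2 * m + 3) * (legendreInt (m + 1) (n + 2) - legendreInt (m + 1) n) := by
    rw [legendreInt, legendreInt, ← intervalIntegral.integral_sub (hI _ _) (hI _ _),
      ← intervalIntegral.integral_const_mul, ← intervalIntegral.integral_const_mul]
    congr 1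
    funext t
    have h1 := congrArg (eval (2 * t - 1)) (legendrePoly_sub n)
    simp only [eval_sub, eval_mul, eval_C] at h1
    rw [legendrePoly_sub, derivative_C_mul, derivative_legendrePrimitive, eval_mul, eval_C]
    linear_combination (-(2 * (m : ℝ) + 3) * (legendrePoly (m + 1)).eval t) * h1
  rw [hR] at h
  rw [← hL, h]
  ring

theorem alpertC_partial_difference' (i j : ℕ) (hj : 1 ≤ j) (hij : j ≤ i) :
    Real.sqrt ((2 * i + 1) / (2 * i - 1)) * alpertC (i - 1) j +
      Real.sqrt ((2 * i + 1) / (2 * i + 3)) * alpertC (i + 1) j =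
    (1 / 2) * Real.sqrt ((2 * j - 1) / (2 * j + 1)) * alpertC i (j - 1) +
      (1 / 2) * Real.sqrt ((2 * j + 3) / (2 * j + 1)) * alpertC i (j + 1) +
      alpertC i j := by
  obtain ⟨m, rfl⟩ : ∃ m, i = m + 1 := ⟨i - 1, by omega⟩
  obtain ⟨n, rfl⟩ : ∃ n, j = n + 1 := ⟨j - 1, by omega⟩
  simp only [add_tsub_cancel_right, alpertC_eq]
  push_cast
  have hA := legendreInt_mul m n
  have hB := legendreInt_parts m n
  have key : (legendreInt m (n + 1) + legendreInt (m + 2) (n + 1)) =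
      (1 / 2) * ((2 * n + 1) / (2 * n + 3)) * legendreInt (m + 1) n
      + (1 / 2) * ((2 * n + 5) / (2 * n + 3)) * legendreInt (m + 1) (n + 2)
      + legendreInt (m + 1) (n + 1) := by
    have hn : (2 * (n : ℝ) + 3) ≠ 0 := by positivity
    have hm : (2 * (m : ℝ) + 3) ≠ 0 := by positivity
    field_simp
    apply mul_left_cancel₀ hm
    linear_combination 2 * hA - hB
  -- the square-root weights all reduce to the common factor `√((2i+1)/2) · √((2j+1)/2)`
  have s1 : √((2 * ((m : ℝ) + 1) + 1) / (2 * ((m : ℝ) + 1) - 1)) * √((2 * (m : ℝ) + 1) / 2)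
      = √((2 * ((m : ℝ) + 1) + 1) / 2) := by
    rw [show 2 * ((m : ℝ) + 1) - 1 = 2 * m + 1 by ring, ← Real.sqrt_mul (by positivity)]
    congr 1
    field_simp
  have s2 : √((2 * ((m : ℝ) + 1) + 1) / (2 * ((m : ℝ) + 1) + 3))
      * √((2 * ((m : ℝ) + 1 + 1) + 1) / 2) = √((2 * ((m : ℝ) + 1) + 1) / 2) := by
    rw [← Real.sqrt_mul (by positivity)]
    congr 1
    field_simp
    ring
  have s3 : √((2 * ((n : ℝ) + 1) - 1) / (2 * ((n : ℝ) + 1) + 1)) * √((2 * (n : ℝ) + 1) / 2)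
      = (2 * n + 1) / (2 * n + 3) * √((2 * ((n : ℝ) + 1) + 1) / 2) := by
    have h0 : (0 : ℝ) ≤ (2 * n + 1) / (2 * n + 3) := by positivity
    rw [show 2 * ((n : ℝ) + 1) - 1 = 2 * n + 1 by ring,
      show 2 * ((n : ℝ) + 1) + 1 = 2 * n + 3 by ring, ← Real.sqrt_mul (by positivity)]
    nth_rewrite 2 [← Real.sqrt_sq h0]
    rw [← Real.sqrt_mul (by positivity)]
    congr 1
    field_simp
  have s4 : √((2 * ((n : ℝ) + 1) + 3) / (2 * ((n : ℝ) + 1) + 1))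
      * √((2 * ((n : ℝ) + 1 + 1) + 1) / 2)
      = (2 * n + 5) / (2 * n + 3) * √((2 * ((n : ℝ) + 1) + 1) / 2) := by
    have h0 : (0 : ℝ) ≤ (2 * n + 5) / (2 * n + 3) := by positivity
    rw [show 2 * ((n : ℝ) + 1) + 3 = 2 * n + 5 by ring,
      show 2 * ((n : ℝ) + 1 + 1) + 1 = 2 * n + 5 by ring,
      show 2 * ((n : ℝ) + 1) + 1 = 2 * n + 3 by ring, ← Real.sqrt_mul (by positivity)]
    nth_rewrite 2 [← Real.sqrt_sq h0]
    rw [← Real.sqrt_mul (by positivity)]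
    congr 1
    field_simp
  set A := √((2 * ((m : ℝ) + 1) + 1) / 2)
  set B := √((2 * ((n : ℝ) + 1) + 1) / 2)
  linear_combination (2 * A * B) * key + (2 * B * legendreInt m (n + 1)) * s1
    + (2 * B * legendreInt (m + 2) (n + 1)) * s2 - (A * legendreInt (m + 1) n) * s3
    - (A * legendreInt (m + 1) (n + 2)) * s4
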